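/- Let Φ denote the cumulative distribution function of the standard normal distribution and, for ρ ∈ (−1,1) and r ∈ (0,1), define Γ_ρ(r) = ∫_{−∞}^{Φ^{−1}(r)} ∫_{−∞}^{Φ^{−1}(r)} (2π√(1−ρ²))^{−1} · exp(−(x² − 2ρxy + y²)/(2(1−ρ²))) dy dx, the probability that a mean-zero bivariate normal pair with unit variances and correlation ρ has both coordinates at most Φ^{−1}(r). Then for ρ = −0.52 one has (3 − ρ) · ∫_0^1 Γ_ρ(r) dr ≥ 1.015. -/

import Mathlib

open Real

/-- The cumulative distribution function of the standard normal distribution. -/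
noncomputable def stdNormalCDF (x : ℝ) : ℝ :=
  ∫ t in Set.Iic x, (Real.sqrt (2 * π))⁻¹ * Real.exp (-(t ^ 2) / 2)

/-- `Γ_ρ(r)`: the probability that a mean-zero bivariate normal pair with unit variances and
correlation `ρ` has both coordinates at most `Φ⁻¹(r)`, written as an explicit double
integral of the bivariate normal density. -/
noncomputable def GammaRho (ρ r : ℝ) : ℝ :=
  ∫ x in Set.Iic (Function.invFun stdNormalCDF r),
    ∫ y in Set.Iic (Function.invFun stdNormalCDF r),
      (2 * π * Real.sqrt (1 - ρ ^ 2))⁻¹ *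
        Real.exp (-((x ^ 2 - 2 * ρ * x * y + y ^ 2) / (2 * (1 - ρ ^ 2))))


open MeasureTheory ProbabilityTheory Filter Topology

noncomputable def stdPhi (t : ℝ) : ℝ := (Real.sqrt (2 * π))⁻¹ * Real.exp (-(t ^ 2) / 2)

lemma stdPhi_pos (t : ℝ) : 0 < stdPhi t := by unfold stdPhi; positivity

lemma stdPhi_cont : Continuous stdPhi := by unfold stdPhi; fun_prop

lemma stdPhi_eq : stdPhi = gaussianPDFReal 0 1 := by
  funext t; simp [stdPhi, gaussianPDFReal]

lemma stdPhi_int : Integrable stdPhi := by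
  rw [stdPhi_eq]; exact integrable_gaussianPDFReal 0 1

lemma cdf_eq (x : ℝ) : stdNormalCDF x = cdf (gaussianReal 0 1) x := by
  rw [cdf_eq_real, measureReal_def, gaussianReal_apply_eq_integral 0 one_ne_zero,
    ENNReal.toReal_ofReal (integral_nonneg fun t => gaussianPDFReal_nonneg 0 1 t), ← stdPhi_eq]
  rfl

lemma cdf_deriv (x : ℝ) : HasDerivAt stdNormalCDF (stdPhi x) x := by
  have h : stdNormalCDF = fun y => stdNormalCDF 0 + ∫ t in (0:ℝ)..y, stdPhi t := by
    funext y
    have := intervalIntegral.integral_Iic_sub_Iic (f := stdPhi) (μ := volume) (a := 0) (b := y)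
      stdPhi_int.integrableOn stdPhi_int.integrableOn
    rw [← this]
    change stdNormalCDF y = stdNormalCDF 0 + (stdNormalCDF y - stdNormalCDF 0)
    ring
  rw [h]
  exact (intervalIntegral.integral_hasDerivAt_right (stdPhi_cont.intervalIntegrable _ _)
    (stdPhi_cont.stronglyMeasurableAtFilter _ _) stdPhi_cont.continuousAt).const_add _

lemma cdf_strictMono : StrictMono stdNormalCDF :=
  strictMono_of_deriv_pos fun x => by rw [(cdf_deriv x).deriv]; exact stdPhi_pos x

lemma cdf_cont : Continuous stdNormalCDF :=
  continuous_iff_continuousAt.2 fun x => (cdf_deriv x).continuousAt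

lemma cdf_range : stdNormalCDF '' Set.univ = Set.Ioo 0 1 := by
  have h0 : Tendsto stdNormalCDF atBot (𝓝 0) := by
    rw [show stdNormalCDF = _ from funext cdf_eq]; exact tendsto_cdf_atBot _
  have h1 : Tendsto stdNormalCDF atTop (𝓝 1) := by
    rw [show stdNormalCDF = _ from funext cdf_eq]; exact tendsto_cdf_atTop _
  ext r
  constructor
  · rintro ⟨x, -, rfl⟩
    constructor
    · have := cdf_strictMono (show x - 1 < x by linarith)
      have h := cdf_nonneg (gaussianReal 0 1) (x - 1)
      rw [← cdf_eq] at h; linarith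
    · have := cdf_strictMono (show x < x + 1 by linarith)
      have h := cdf_le_one (gaussianReal 0 1) (x + 1)
      rw [← cdf_eq] at h; linarith
  · rintro ⟨hr0, hr1⟩
    rw [Set.image_univ]
    exact mem_range_of_exists_le_of_exists_ge cdf_cont
      ((h0.eventually (ge_mem_nhds hr0)).exists) ((h1.eventually (le_mem_nhds hr1)).exists)

lemma subst_cdf (ρ : ℝ) : ∫ r in (0 : ℝ)..1, GammaRho ρ r =
    ∫ t, stdPhi t * ∫ x in Set.Iic t, ∫ y in Set.Iic t, (2 * π * Real.sqrt (1 - ρ ^ 2))⁻¹ *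
        Real.exp (-((x ^ 2 - 2 * ρ * x * y + y ^ 2) / (2 * (1 - ρ ^ 2)))) := by
  rw [intervalIntegral.integral_of_le zero_le_one, integral_Ioc_eq_integral_Ioo, ← cdf_range,
    integral_image_eq_integral_abs_deriv_smul MeasurableSet.univ
      (fun x _ => (cdf_deriv x).hasDerivWithinAt) cdf_strictMono.injective.injOn,
    setIntegral_univ]
  refine integral_congr_ae (ae_of_all _ fun t => ?_)
  simp only [GammaRho, Function.leftInverse_invFun cdf_strictMono.injective t, smul_eq_mul,
    abs_of_pos (stdPhi_pos t)]

lemma shift_Iic (f : ℝ → ℝ) (t : ℝ) :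
    ∫ x in Set.Iic t, f x = ∫ u in Set.Ioi (0:ℝ), f (t - u) := by
  rw [← integral_Ici_eq_integral_Ioi, ← integral_indicator measurableSet_Iic,
    ← integral_indicator measurableSet_Ici, ← integral_sub_left_eq_self _ volume t]
  congr 1; funext u
  simp [Set.indicator]

lemma int_u (q : ℝ) (hq : 0 < q) : IntegrableOn (fun u : ℝ => u * exp (-(q * u ^ 2))) (Set.Ioi 0) ∧
    ∫ u in Set.Ioi (0:ℝ), u * exp (-(q * u ^ 2)) = 1 / (2 * q) := by
  have hd : ∀ x ∈ Set.Ici (0:ℝ), HasDerivAt (fun u : ℝ => -(1 / (2 * q)) * exp (-(q * u ^ 2)))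
      (x * exp (-(q * x ^ 2))) x := by
    intro x _
    have := ((((hasDerivAt_pow 2 x).const_mul q).neg).exp).const_mul (-(1 / (2 * q)))
    refine this.congr_deriv ?_
    simp
    field_simp
  have ht : Tendsto (fun u : ℝ => -(1 / (2 * q)) * exp (-(q * u ^ 2))) atTop (𝓝 0) := by
    rw [show (0:ℝ) = -(1 / (2 * q)) * 0 by simp]
    refine Tendsto.const_mul _ (tendsto_exp_neg_atTop_nhds_zero.comp ?_)
    exact (tendsto_pow_atTop two_ne_zero).const_mul_atTop hq
  have hn : ∀ x ∈ Set.Ioi (0:ℝ), 0 ≤ x * exp (-(q * x ^ 2)) := fun x hx =>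
    mul_nonneg (le_of_lt hx) (exp_pos _).le
  refine ⟨integrableOn_Ioi_deriv_of_nonneg' hd hn ht, ?_⟩
  rw [integral_Ioi_of_hasDerivAt_of_nonneg' hd hn ht]
  simp

lemma int_s (c d : ℝ) (hd : 0 < d) : IntegrableOn (fun s : ℝ => 1 / ((s - c) ^ 2 + d ^ 2)) (Set.Ioi 0) ∧
    ∫ s in Set.Ioi (0:ℝ), 1 / ((s - c) ^ 2 + d ^ 2) = (π / 2 + arctan (c / d)) / d := by
  have hdd : ∀ x ∈ Set.Ici (0:ℝ), HasDerivAt (fun s : ℝ => 1 / d * arctan ((s - c) / d))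
      (1 / ((x - c) ^ 2 + d ^ 2)) x := by
    intro x _
    have := ((((hasDerivAt_id x).sub_const c).div_const d).arctan).const_mul (1 / d)
    refine this.congr_deriv ?_
    simp only [id]
    field_simp
    ring
  have ht : Tendsto (fun s : ℝ => 1 / d * arctan ((s - c) / d)) atTop (𝓝 (1 / d * (π / 2))) := by
    refine Tendsto.const_mul _ ((tendsto_arctan_atTop.mono_right nhdsWithin_le_nhds).comp ?_)
    exact (tendsto_atTop_add_const_right _ (-c) tendsto_id).atTop_div_const hd
  have hn : ∀ x ∈ Set.Ioi (0:ℝ), 0 ≤ 1 / ((x - c) ^ 2 + d ^ 2) := fun x _ => by positivity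
  refine ⟨integrableOn_Ioi_deriv_of_nonneg' hdd hn ht, ?_⟩
  rw [integral_Ioi_of_hasDerivAt_of_nonneg' hdd hn ht]
  rw [zero_sub, neg_div, arctan_neg]
  ring

/-- the quadratic form in the ratio variable -/
noncomputable def qq (s : ℝ) : ℝ := (s ^ 2 - 0.48 * s + 1) / 3.7696

lemma qq_pos (s : ℝ) : 0 < qq s := by
  unfold qq
  apply div_pos _ (by norm_num)
  nlinarith [sq_nonneg (s - 0.24)]

lemma orthant : ∫ u in Set.Ioi (0:ℝ), ∫ v in Set.Ioi (0:ℝ),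
      exp (-((u ^ 2 - 0.48 * u * v + v ^ 2) / 3.7696)) =
    2 * √0.9424 * (π / 2 + arctan (0.24 / √0.9424)) := by
  have hd : 0 < √(0.9424:ℝ) := by positivity
  have hd2 : √(0.9424:ℝ) ^ 2 = 0.9424 := Real.sq_sqrt (by norm_num)
  have hq : ∀ s, 1 / (2 * qq s) = 1.8848 * (1 / ((s - 0.24) ^ 2 + √(0.9424:ℝ) ^ 2)) := by
    intro s
    have := qq_pos s
    have h2 : (s - 0.24) ^ 2 + √(0.9424:ℝ) ^ 2 = 3.7696 * qq s := by
      rw [hd2]; unfold qq; ring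
    rw [h2]; field_simp; norm_num
  have h1 : ∀ u ∈ Set.Ioi (0:ℝ), ∫ v in Set.Ioi (0:ℝ),
      exp (-((u ^ 2 - 0.48 * u * v + v ^ 2) / 3.7696)) =
      ∫ s in Set.Ioi (0:ℝ), u * exp (-(qq s * u ^ 2)) := by
    intro u hu
    have hu' : (0:ℝ) < u := hu
    have := integral_comp_mul_left_Ioi
      (fun v => exp (-((u ^ 2 - 0.48 * u * v + v ^ 2) / 3.7696))) 0 hu'
    rw [mul_zero, smul_eq_mul] at this
    rw [integral_const_mul, eq_comm, ← mul_right_inj' (inv_ne_zero hu'.ne'), ← this,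
      inv_mul_cancel_left₀ hu'.ne']
    congr 1; funext s; congr 1; unfold qq; ring
  rw [setIntegral_congr_fun measurableSet_Ioi h1]
  rw [integral_integral_swap]
  · simp_rw [fun s => (int_u (qq s) (qq_pos s)).2, hq]
    rw [integral_const_mul, (int_s _ _ hd).2]
    field_simp
    rw [hd2]; ring
  · rw [integrable_prod_iff']
    · refine ⟨ae_of_all _ fun s => (int_u _ (qq_pos s)).1, ?_⟩
      have : ∀ s, ∫ u in Set.Ioi (0:ℝ), ‖Function.uncurry (fun u s => u * exp (-(qq s * u ^ 2))) (u, s)‖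
          = 1.8848 * (1 / ((s - 0.24) ^ 2 + √(0.9424:ℝ) ^ 2)) := by
        intro s
        rw [← hq, ← (int_u _ (qq_pos s)).2]
        refine setIntegral_congr_fun measurableSet_Ioi fun u hu => ?_
        have hu' : (0:ℝ) < u := hu
        simp [abs_of_pos hu']
      simp_rw [this]
      exact (int_s _ _ hd).1.const_mul _
    · apply Continuous.aestronglyMeasurable
      unfold qq Function.uncurry
      fun_prop

lemma int_prod (c : ℝ) (hc : 0 < c) : Integrable
    (fun p : ℝ × ℝ => exp (-c * p.1 ^ 2) * exp (-c * p.2 ^ 2))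
    ((volume.restrict (Set.Ioi (0:ℝ))).prod (volume.restrict (Set.Ioi (0:ℝ)))) :=
  (integrable_exp_neg_mul_sq hc).restrict.mul_prod (integrable_exp_neg_mul_sq hc).restrict

/-- total exponent -/
noncomputable def QQ (t u v : ℝ) : ℝ := t ^ 2 / 2 +
  ((t - u) ^ 2 - 2 * (-0.52) * (t - u) * (t - v) + (t - v) ^ 2) / (2 * (1 - (-0.52) ^ 2))

lemma QQ_low (t u v : ℝ) : 0.05 * t ^ 2 + (0.05 * u ^ 2 + 0.05 * v ^ 2) ≤ QQ t u v := by
  unfold QQ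
  norm_num
  nlinarith [sq_nonneg (t - u - (t - v)), sq_nonneg (t - u + (t - v)), sq_nonneg (t - 0.4 * (u + v)),
    sq_nonneg (u - v), sq_nonneg (u + v), sq_nonneg t]

lemma t_int (u v : ℝ) : ∫ t, exp (-QQ t u v) =
    √(π / (31 / 12)) * exp (-((u ^ 2 - 0.48 * u * v + v ^ 2) / 3.7696)) := by
  have h : ∀ t, exp (-QQ t u v) = exp (-(31 / 12) * (t - 25 / 62 * (u + v)) ^ 2) *
      exp (-((u ^ 2 - 0.48 * u * v + v ^ 2) / 3.7696)) := by
    intro t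
    rw [← exp_add]; congr 1; unfold QQ; norm_num; ring
  simp_rw [h]
  rw [integral_mul_const, integral_sub_right_eq_self (fun t => exp (-(31 / 12) * t ^ 2)),
    integral_gaussian]

lemma triple : ∫ t, ∫ u in Set.Ioi (0:ℝ), ∫ v in Set.Ioi (0:ℝ), exp (-QQ t u v) =
    √(π / (31 / 12)) * (2 * √0.9424 * (π / 2 + arctan (0.24 / √0.9424))) := by
  have hcont : Continuous fun p : ℝ × ℝ × ℝ => exp (-QQ p.1 p.2.1 p.2.2) := by
    unfold QQ; fun_prop
  have h1 : ∀ t, ∫ u in Set.Ioi (0:ℝ), ∫ v in Set.Ioi (0:ℝ), exp (-QQ t u v) =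
      ∫ p, exp (-QQ t p.1 p.2)
        ∂((volume.restrict (Set.Ioi (0:ℝ))).prod (volume.restrict (Set.Ioi (0:ℝ)))) := by
    intro t
    refine (integral_prod (fun p : ℝ × ℝ => exp (-QQ t p.1 p.2)) ?_).symm
    refine (int_prod 0.05 (by norm_num)).mono' ?_ (ae_of_all _ fun p => ?_)
    · exact (hcont.comp (by fun_prop : Continuous fun p : ℝ × ℝ => (t, p))).aestronglyMeasurable
    · rw [norm_of_nonneg (exp_pos _).le, ← exp_add, exp_le_exp]
      nlinarith [QQ_low t p.1 p.2, sq_nonneg t]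
  simp_rw [h1]
  rw [integral_integral_swap]
  · simp_rw [t_int]
    rw [integral_const_mul, ← orthant]
    congr 1
    refine integral_prod (fun p : ℝ × ℝ => exp (-((p.1 ^ 2 - 0.48 * p.1 * p.2 + p.2 ^ 2) / 3.7696))) ?_
    refine (int_prod 0.05 (by norm_num)).mono' ?_ (ae_of_all _ fun p => ?_)
    · exact Continuous.aestronglyMeasurable (by fun_prop)
    · rw [norm_of_nonneg (exp_pos _).le, ← exp_add, exp_le_exp]
      have : 0.05 * p.1 ^ 2 + 0.05 * p.2 ^ 2 ≤ (p.1 ^ 2 - 0.48 * p.1 * p.2 + p.2 ^ 2) / 3.7696 := by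
        rw [le_div_iff₀ (by norm_num)]
        nlinarith [sq_nonneg (p.1 - p.2), sq_nonneg p.1, sq_nonneg p.2]
      linarith
  · refine ((integrable_exp_neg_mul_sq (show (0:ℝ) < 0.05 by norm_num)).mul_prod
      (int_prod 0.05 (by norm_num))).mono' hcont.aestronglyMeasurable (ae_of_all _ fun p => ?_)
    simp only [Function.uncurry]
    rw [norm_of_nonneg (exp_pos _).le, ← exp_add, ← exp_add, exp_le_exp]
    nlinarith [QQ_low p.1 p.2.1 p.2.2]

lemma gamma_eq : ∫ r in (0 : ℝ)..1, GammaRho (-0.52) r =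
    (π / 2 + arctan (0.24 / √0.9424)) / (2 * π) := by
  rw [subst_cdf]
  have h : ∀ t, (stdPhi t * ∫ x in Set.Iic t, ∫ y in Set.Iic t,
      (2 * π * Real.sqrt (1 - (-0.52) ^ 2))⁻¹ *
        Real.exp (-((x ^ 2 - 2 * (-0.52) * x * y + y ^ 2) / (2 * (1 - (-0.52) ^ 2))))) =
      ((√(2 * π))⁻¹ * (2 * π * Real.sqrt (1 - (-0.52) ^ 2))⁻¹) *
        ∫ u in Set.Ioi (0:ℝ), ∫ v in Set.Ioi (0:ℝ), exp (-QQ t u v) := by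
    intro t
    rw [shift_Iic]
    simp_rw [shift_Iic _ t, integral_const_mul]
    unfold stdPhi
    rw [mul_mul_mul_comm, ← integral_const_mul]
    congr 1
    refine integral_congr_ae (ae_of_all _ fun u => ?_)
    beta_reduce
    rw [← integral_const_mul]
    refine integral_congr_ae (ae_of_all _ fun v => ?_)
    simp only [QQ]
    rw [← exp_add]
    congr 1; ring
  simp_rw [h]
  rw [integral_const_mul, triple]
  have hk : (√(2 * π))⁻¹ * (√(1 - (-0.52) ^ 2))⁻¹ * √(π / (31 / 12)) * √0.9424 = 1 / 2 := by
    rw [← Real.sqrt_inv, ← Real.sqrt_inv, ← Real.sqrt_mul (by positivity),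
      ← Real.sqrt_mul (by positivity), ← Real.sqrt_mul (by norm_num; positivity)]
    rw [show (2 * π)⁻¹ * (1 - (-0.52) ^ 2)⁻¹ * (π / (31 / 12)) * 0.9424 = (1 / 2 : ℝ) ^ 2 by
      field_simp; norm_num]
    exact Real.sqrt_sq (by norm_num)
  rw [mul_inv]
  linear_combination (2 * π)⁻¹ * 2 * (π / 2 + arctan (0.24 / √0.9424)) * hk

lemma arctan_low : 0.241 ≤ arctan (0.24 / √0.9424) := by
  have h : arctan (0.24 / √0.9424) = arcsin 0.24 := by
    rw [arcsin_eq_arctan (by norm_num)]; norm_num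
  rw [h, le_arcsin_iff_sin_le' (by constructor <;> linarith [pi_gt_three])]
  have := abs_le.1 (sin_bound (x := 0.241) (by rw [abs_of_pos] <;> norm_num))
  rw [abs_of_pos (by norm_num)] at this
  norm_num at this ⊢
  linarith [this.2]

/-- For `ρ = −0.52` one has `(3 − ρ) · ∫_0^1 Γ_ρ(r) dr ≥ 1.015`. -/
theorem inapproximability_ratio_bound :
    (1.015 : ℝ) ≤ (3 - (-0.52)) * ∫ r in (0 : ℝ)..1, GammaRho (-0.52) r := by
  rw [gamma_eq, ← mul_div_assoc, le_div_iff₀ (by positivity)]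
  nlinarith [arctan_low, pi_lt_d6]
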